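/- With notation as in the divided-derivative formula δ_l(f^n) = f^{n−l} Σ_a C(a) Π_j δ_j(f)^{a_j}, the sum of the coefficients satisfies Σ_a C(a) ≤ binom(n+l−1, l) ≤ 2^{n+l}. -/

import Mathlib

/-- Divided derivative `δ_l = (1/l!)(d/dt)^l` associated to a derivation. -/
noncomputable def dividedDeriv {K : Type*} [Field K] [Algebra ℚ K]
    (d : Derivation ℚ K K) (l : ℕ) (f : K) : K :=
  (l.factorial : K)⁻¹ * (⇑d)^[l] f

/-!
By the Leibniz rule, `f ↦ ∑ δ_l(f) T^l` is multiplicative, so `δ_l(f^n)` is the coefficient of `T^l`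
in the `n`-th power of `∑ δ_j(f) T^j`. The multinomial theorem expands it over tuples `b` with
`∑ b_j = n` and `∑ j b_j = l`. Comparing the two sums gives `b_0 ≥ n - l`, so `f^(n-l)` splits off
and leaves a tuple `a` with `∑ a_j = ∑ j a_j = l`. The coefficients do not depend on the series:
evaluating the same expansion at `∑ T^j = (1 - T)⁻¹` shows that they add up to the
coefficient of `T^l` in `(1 - T)^(-n)`.
-/

open Finset PowerSeries

section TaylorHom

theorem iterate_derivation_mul {R A : Type*} [CommSemiring R] [CommSemiring A] [Algebra R A]
    (d : Derivation R A A) (n : ℕ) (f g : A) :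
    d^[n] (f * g) = ∑ ij ∈ antidiagonal n, n.choose ij.1 • (d^[ij.1] f * d^[ij.2] g) := by
  induction n with
  | zero => simp
  | succ n ih =>
    rw [sum_antidiagonal_choose_succ_nsmul (fun i j => d^[i] f * d^[j] g),
      Function.iterate_succ_apply', ih, map_sum, ← sum_add_distrib]
    refine sum_congr rfl fun ij hij => ?_
    rw [← Nat.choose_symm_of_eq_add (mem_antidiagonal.1 hij).symm, map_nsmul, d.leibniz,
      nsmul_add]
    simp only [smul_eq_mul, Function.iterate_succ_apply', mul_comm (d^[ij.2] g)]

variable {K : Type*} [Field K] [Algebra ℚ K] (d : Derivation ℚ K K)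

theorem dividedDeriv_zero_left (f : K) : dividedDeriv d 0 f = f := by
  simp [dividedDeriv]

theorem dividedDeriv_mul (n : ℕ) (f g : K) :
    dividedDeriv d n (f * g) =
      ∑ ij ∈ antidiagonal n, dividedDeriv d ij.1 f * dividedDeriv d ij.2 g := by
  have : CharZero K := algebraRat.charZero K
  simp only [dividedDeriv, iterate_derivation_mul, mul_sum]
  refine sum_congr rfl fun ⟨i, j⟩ hij => ?_
  obtain rfl := mem_antidiagonal.1 hij
  rw [nsmul_eq_mul, Nat.cast_add_choose]
  have hfactorial (m : ℕ) : (m.factorial : K) ≠ 0 := Nat.cast_ne_zero.2 m.factorial_ne_zero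
  field_simp [hfactorial]

/-- The Taylor homomorphism `f ↦ ∑ δ_l(f) T^l` of a derivation, which turns divided derivatives of
a power of `f` into coefficients of a power of a series. -/
noncomputable def taylorHom : K →+* K⟦X⟧ where
  toFun f := PowerSeries.mk fun l => dividedDeriv d l f
  map_zero' := by ext l; simp [dividedDeriv, iterate_map_zero]
  map_add' f g := by ext l; simp [dividedDeriv, iterate_map_add, mul_add]
  map_one' := by
    ext l
    cases l <;> simp [dividedDeriv, coeff_one, iterate_map_zero]
  map_mul' f g := by ext l; simp [dividedDeriv_mul, coeff_mul]

theorem coeff_taylorHom (l : ℕ) (f : K) : coeff l (taylorHom d f) = dividedDeriv d l f :=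
  coeff_mk l fun l => dividedDeriv d l f

end TaylorHom

section WeightedTuples

/-- The exponent tuples `(a_0, …, a_{N-1})` of total degree `∑ a_j = n` and weight
`∑ j a_j = w`: they index the terms of the coefficient of `T^w` in `(∑_{j < N} x_j T^j)^n`. -/
def weightedTuples (N n w : ℕ) : Finset (Fin N → ℕ) :=
  {a ∈ piAntidiag univ n | ∑ j : Fin N, (j : ℕ) * a j = w}

variable {N n w : ℕ}

theorem mem_weightedTuples {a : Fin N → ℕ} :
    a ∈ weightedTuples N n w ↔ ∑ j, a j = n ∧ ∑ j : Fin N, (j : ℕ) * a j = w := by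
  simp [weightedTuples]

theorem le_add_of_mem_weightedTuples {a : Fin (N + 1) → ℕ} (ha : a ∈ weightedTuples (N + 1) n w) :
    n ≤ a 0 + w := by
  obtain ⟨hdeg, hweight⟩ := mem_weightedTuples.1 ha
  rw [← hdeg, ← hweight, Fin.sum_univ_succ, Fin.sum_univ_succ (fun j => (j : ℕ) * a j)]
  have htail : ∑ j : Fin N, a j.succ ≤ ∑ j : Fin N, (j.succ : ℕ) * a j.succ :=
    sum_le_sum fun j _ => Nat.le_mul_of_pos_left _ (by simp)
  simpa using htail

theorem add_single_zero_mem_weightedTuples {a : Fin (N + 1) → ℕ} {k : ℕ} :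
    a + Pi.single 0 k ∈ weightedTuples (N + 1) (n + k) w ↔ a ∈ weightedTuples (N + 1) n w := by
  simp [mem_weightedTuples, sum_add_distrib, mul_add, Pi.single_apply]

theorem weightedTuples_add_eq_map (hw : w ≤ n) (k : ℕ) :
    weightedTuples (N + 1) (n + k) w =
      (weightedTuples (N + 1) n w).map (addRightEmbedding (Pi.single 0 k)) := by
  ext b
  simp only [mem_map, addRightEmbedding_apply]
  refine ⟨fun hb => ?_, ?_⟩
  · have hk : Pi.single 0 k ≤ b := by
      have hzero : n + k ≤ b 0 + w := le_add_of_mem_weightedTuples hb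
      exact update_le_iff.2 ⟨by lia, fun _ _ => Nat.zero_le _⟩
    refine ⟨b - Pi.single 0 k, ?_, tsub_add_cancel_of_le hk⟩
    rwa [← add_single_zero_mem_weightedTuples, tsub_add_cancel_of_le hk]
  · rintro ⟨a, ha, rfl⟩
    exact add_single_zero_mem_weightedTuples.2 ha

end WeightedTuples

section CoeffPow

theorem prod_pow_add_single {ι M : Type*} [Fintype ι] [DecidableEq ι] [CommMonoid M] (x : ι → M)
    (a : ι → ℕ) (i : ι) (k : ℕ) :
    ∏ j, x j ^ (a + Pi.single i k : ι → ℕ) j = x i ^ k * ∏ j, x j ^ a j := by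
  simp_rw [Pi.add_apply, pow_add, prod_mul_distrib, Pi.single_apply, pow_ite, pow_zero]
  rw [prod_ite_eq' univ i, if_pos (mem_univ i), mul_comm]

variable {R : Type*} [CommSemiring R] {N w : ℕ}

theorem coeff_sum_C_mul_X_pow_pow (x : Fin N → R) (n w : ℕ) :
    ((∑ j, Polynomial.C (x j) * Polynomial.X ^ (j : ℕ)) ^ n).coeff w =
      ∑ b ∈ weightedTuples N n w, Nat.multinomial univ b * ∏ j, x j ^ b j := by
  have hmonomial (b : Fin N → ℕ) :
      ∏ j, (Polynomial.C (x j) * Polynomial.X ^ (j : ℕ)) ^ b j =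
        Polynomial.C (∏ j, x j ^ b j) * Polynomial.X ^ ∑ j : Fin N, (j : ℕ) * b j := by
    simp only [mul_pow, prod_mul_distrib, ← pow_mul, prod_pow_eq_pow_sum, map_prod, map_pow]
  simp only [sum_pow_eq_sum_piAntidiag, hmonomial, Polynomial.finsetSum_coeff,
    Polynomial.coeff_natCast_mul, Polynomial.coeff_C_mul_X_pow, mul_ite, mul_zero,
    weightedTuples, sum_filter, eq_comm (a := w)]

theorem coeff_pow_eq_sum_weightedTuples (φ : R⟦X⟧) (n : ℕ) (hw : w < N) :
    coeff w (φ ^ n) =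
      ∑ b ∈ weightedTuples N n w, Nat.multinomial univ b * ∏ j : Fin N, coeff j φ ^ b j := by
  have htrunc : trunc N φ = ∑ j : Fin N, Polynomial.C (coeff j φ) * Polynomial.X ^ (j : ℕ) := by
    rw [Fin.sum_univ_eq_sum_range fun j => Polynomial.C (coeff j φ) * Polynomial.X ^ j]
    ext i
    simp [coeff_trunc]
  rw [← coeff_sum_C_mul_X_pow_pow, ← htrunc, ← coeff_coe_trunc_of_lt hw, ← trunc_trunc_pow,
    coeff_coe_trunc_of_lt hw, ← Polynomial.coe_pow, Polynomial.coeff_coe]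

theorem coeff_pow_add_eq_coeff_zero_pow_mul (φ : R⟦X⟧) {m : ℕ} (k : ℕ) (hwm : w ≤ m)
    (hwN : w ≤ N) :
    coeff w (φ ^ (m + k)) = coeff 0 φ ^ k *
      ∑ a ∈ weightedTuples (N + 1) m w,
        Nat.multinomial univ (a + Pi.single 0 k) * ∏ j : Fin (N + 1), coeff j φ ^ a j := by
  rw [coeff_pow_eq_sum_weightedTuples φ _ (Nat.lt_succ_of_le hwN), weightedTuples_add_eq_map hwm,
    sum_map, mul_sum]
  refine sum_congr rfl fun a _ => ?_
  rw [addRightEmbedding_apply, prod_pow_add_single (fun j : Fin (N + 1) => coeff j φ),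
    Fin.val_zero, mul_left_comm]

theorem coeff_mk_one_pow (S : Type*) [CommRing S] (n l : ℕ) :
    coeff l ((PowerSeries.mk 1 : S⟦X⟧) ^ n) = (n + l - 1).choose l := by
  cases n with
  -- `0 + l - 1` is truncated at `l = 0`, where the formula nevertheless holds: both sides are `1`.
  | zero => cases l <;> simp [coeff_one]
  | succ n =>
    rw [mk_one_pow_eq_mk_choose_add, coeff_mk, Nat.choose_symm_add, Nat.add_right_comm,
      Nat.add_sub_cancel]

theorem sum_multinomial_add_single_zero {m : ℕ} (k : ℕ) (hwm : w ≤ m) (hwN : w ≤ N) :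
    ∑ a ∈ weightedTuples (N + 1) m w, Nat.multinomial univ (a + Pi.single 0 k) =
      (m + k + w - 1).choose w := by
  have hsum := coeff_pow_add_eq_coeff_zero_pow_mul (PowerSeries.mk 1 : ℤ⟦X⟧) k hwm hwN
  rw [coeff_mk_one_pow] at hsum
  simp only [coeff_mk, Pi.one_apply, one_pow, prod_const_one, mul_one, one_mul] at hsum
  exact_mod_cast hsum.symm

end CoeffPow

/-- In the expansion `δ_l(f^n) = f^{n−l} Σ_a C(a) Π_j δ_j(f)^{a_j}` (sum over tuples
`a` with `Σ a_j = l`, `Σ j·a_j = l`), the coefficients satisfy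
`Σ_a C(a) ≤ binom(n+l−1, l) ≤ 2^{n+l}`. -/
theorem stmt9 {K : Type*} [Field K] [Algebra ℚ K] (d : Derivation ℚ K K)
    (l n : ℕ) (hln : l ≤ n) :
    ∃ (A : Finset (Fin (l + 1) → ℕ)) (C : (Fin (l + 1) → ℕ) → ℕ),
      (∀ a ∈ A, (∑ j, a j = l) ∧ (∑ j : Fin (l + 1), (j : ℕ) * a j = l)) ∧
      (∀ f : K, dividedDeriv d l (f ^ n) =
        f ^ (n - l) * ∑ a ∈ A, (C a : K) *
          ∏ j : Fin (l + 1), (dividedDeriv d (j : ℕ) f) ^ (a j)) ∧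
      (∑ a ∈ A, C a) ≤ (n + l - 1).choose l ∧
      (n + l - 1).choose l ≤ 2 ^ (n + l) := by
  refine ⟨weightedTuples (l + 1) l l, fun a => Nat.multinomial univ (a + Pi.single 0 (n - l)),
    fun a => mem_weightedTuples.1, fun f => ?_, ?_, ?_⟩
  · have hcoeff := coeff_pow_add_eq_coeff_zero_pow_mul (taylorHom d f) (n - l) le_rfl (le_refl l)
    simpa only [Nat.add_sub_cancel' hln, ← map_pow, coeff_taylorHom, dividedDeriv_zero_left]
      using hcoeff
  · rw [sum_multinomial_add_single_zero (n - l) le_rfl le_rfl, Nat.add_sub_cancel' hln]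
  · exact (Nat.choose_le_two_pow _ _).trans (Nat.pow_le_pow_right two_pos (Nat.sub_le _ _))
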